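/- Let n ≥ 2, let p be a real polynomial of degree n such that every real zero of p is simple and p′ has n − 1 distinct real zeros ξ₁ < ⋯ < ξ_{n−1}, and let κ ≤ 0. Then for every k with 2 ≤ k ≤ n − 1 the number of roots of H_κ[p] in the open interval (ξ_{k−1}, ξ_k), counted with multiplicity, is at most 2; and the number of roots of H_κ[p] in (−∞, ξ₁), as well as in (ξ_{n−1}, ∞), counted with multiplicity, is at most 1. -/

import Mathlib

/-!
Write `q = p'`, `u = p / p'` and `L = p'' / p'`. Since `q` has only real zeros, Laguerre's inequality
`q q'' < q'²` (`laguerre_of_splits`) shows that `L` is strictly decreasing on every interval `I` free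
of zeros of `q`. Where `p' ≠ 0`, the roots of `H_κ[p]` are the solutions of `u L = κ`.

For `κ < 0` such a root has `u` and `L` of opposite signs, both nonzero, which leaves two cases.
* `L < 0 < u`: moving right, `|p|` grows, `|p'|` shrinks and `|L|` grows, so `|u L|` strictly
  increases; there is at most one root (`no_two_roots_right`).
* `u < 0 < L`: moving right, `|p|` and `L` shrink and `|p'|` grows, so `|u L|` strictly decreases;
  there is at most one root (`no_two_roots_left`).

Each root is simple because `-H_κ[p]' / p'² = (1 - κ) L + u L'` there, and the two summands have the
same sign (`derivative_Hk_ne_zero`). For `κ = 0` one has `H_0[p] = -p p''`; here `p` has at most one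
zero in `I` as it is strictly monotone, and `p''` has at most one, as `L` is strictly decreasing.

Finally `L = ∑ 1 / (x - ξⱼ)` has constant sign on each of the two unbounded intervals, so that only
one of the two cases can occur there, and `p''` has no zeros.
-/


open Polynomial

/-- `Hk κ p = κ·(p')² − p·p''`. -/
noncomputable def Hk (κ : ℝ) (p : ℝ[X]) : ℝ[X] :=
  C κ * (derivative p) ^ 2 - p * derivative (derivative p)

/-- `Zreal q` : number of real roots of `q` counted with multiplicity. -/
noncomputable def Zreal (q : ℝ[X]) : ℕ := Multiset.card q.roots

/-- `Zcomplex q` : number of non-real complex roots of `q` counted with multiplicity. -/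
noncomputable def Zcomplex (q : ℝ[X]) : ℕ :=
  Multiset.card ((q.map (algebraMap ℝ ℂ)).roots.filter (fun z => z.im ≠ 0))

/-- Number of real zeros of `Q_κ[p] = H_κ[p]/(p')²` counted with multiplicity. -/
noncomputable def ZQ (κ : ℝ) (p : ℝ[X]) : ℕ :=
  ∑ᶠ x : ℝ, (rootMultiplicity x (Hk κ p) - 2 * rootMultiplicity x (derivative p))

open scoped Classical in
/-- `ZIcount I q` : number of roots of `q` in the set `I` counted with multiplicity. -/
noncomputable def ZIcount (I : Set ℝ) (q : ℝ[X]) : ℕ :=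
  Multiset.card (q.roots.filter (fun x => x ∈ I))

/-- `Zdist q` : number of distinct real roots of `q`. -/
noncomputable def Zdist (q : ℝ[X]) : ℕ := q.roots.toFinset.card

/-! ### Laguerre's inequality and the logarithmic derivative -/

/-- The Laguerre expression `f'² - f f''` of `f = ∏ (X - rᵢ)` at `x`: it is nonnegative, and positive
if `f` is nonconstant and `x` is not a root. The induction step is
`q'² - q q'' = f² + (x - r)² (f'² - f f'')` for `q = (X - r) f`. -/
lemma laguerre_prod (s : Multiset ℝ) (x : ℝ) :
    let f := (s.map (fun r => X - C r)).prod
    f.eval x * (derivative (derivative f)).eval x ≤ (derivative f).eval x ^ 2 ∧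
    (s ≠ 0 → f.eval x ≠ 0 →
      f.eval x * (derivative (derivative f)).eval x < (derivative f).eval x ^ 2) := by
  induction s using Multiset.induction with
  | empty => simp
  | cons r s ih =>
    obtain ⟨ih, -⟩ := ih
    simp only [Multiset.map_cons, Multiset.prod_cons]
    generalize (s.map (fun r => X - C r)).prod = f at *
    have h := mul_le_mul_of_nonneg_left ih (sq_nonneg (x - r))
    simp only [derivative_mul, derivative_sub, derivative_X, derivative_C, derivative_add,
      eval_mul, eval_add, eval_sub, eval_X, eval_C, sub_zero, one_mul]
    refine ⟨by nlinarith [sq_nonneg (f.eval x)], fun _ hx => ?_⟩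
    have : 0 < f.eval x ^ 2 := by
      have : f.eval x ≠ 0 := right_ne_zero_of_mul hx
      positivity
    nlinarith

/-- Laguerre's strict inequality for a nonconstant real-rooted polynomial, off its zeros. -/
lemma laguerre_of_splits {q : ℝ[X]} (hs : q.Splits) (hd : 1 ≤ q.natDegree) {x : ℝ}
    (hx : q.eval x ≠ 0) :
    q.eval x * (derivative (derivative q)).eval x < (derivative q).eval x ^ 2 := by
  have hfac := hs.eq_prod_roots
  have hne : q.roots ≠ 0 := by
    intro h
    have := hs.natDegree_eq_card_roots
    rw [h] at this
    simp at this
    omega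
  have h := (laguerre_prod q.roots x).2 hne
  generalize (q.roots.map (fun r => X - C r)).prod = f at *
  generalize q.leadingCoeff = c at *
  subst hfac
  simp only [eval_mul, eval_C, derivative_C_mul] at *
  have hc : c ≠ 0 := left_ne_zero_of_mul hx
  have h := h (right_ne_zero_of_mul hx)
  have := mul_lt_mul_of_pos_left h (by positivity : 0 < c ^ 2)
  linarith

/-- The logarithmic derivative is strictly decreasing where Laguerre's inequality holds. -/
lemma logDeriv_strictAnti {q : ℝ[X]} {a b : ℝ} (hq : ∀ x ∈ Set.Icc a b, q.eval x ≠ 0)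
    (hL : ∀ x ∈ Set.Icc a b,
      q.eval x * (derivative (derivative q)).eval x < (derivative q).eval x ^ 2) :
    StrictAntiOn (fun x => (derivative q).eval x / q.eval x) (Set.Icc a b) := by
  apply strictAntiOn_of_deriv_neg (convex_Icc a b)
  · exact (derivative q).continuous.continuousOn.div q.continuous.continuousOn hq
  · intro x hx
    rw [interior_Icc] at hx
    have hx := Set.Ioo_subset_Icc_self hx
    rw [(((derivative q).hasDerivAt x).fun_div (q.hasDerivAt x) (hq x hx)).deriv]
    have := hq x hx
    apply div_neg_of_neg_of_pos
    · linarith [hL x hx]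
    · positivity

lemma eval_strictMono {f : ℝ[X]} {a b : ℝ} (h : ∀ x ∈ Set.Icc a b, 0 < (derivative f).eval x) :
    StrictMonoOn (fun x => f.eval x) (Set.Icc a b) := by
  apply strictMonoOn_of_deriv_pos (convex_Icc a b) f.continuous.continuousOn
  intro x hx
  rw [interior_Icc] at hx
  rw [Polynomial.deriv]
  exact h x (Set.Ioo_subset_Icc_self hx)

lemma eval_strictAnti {f : ℝ[X]} {a b : ℝ} (h : ∀ x ∈ Set.Icc a b, (derivative f).eval x < 0) :
    StrictAntiOn (fun x => f.eval x) (Set.Icc a b) := by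
  apply strictAntiOn_of_deriv_neg (convex_Icc a b) f.continuous.continuousOn
  intro x hx
  rw [interior_Icc] at hx
  rw [Polynomial.deriv]
  exact h x (Set.Ioo_subset_Icc_self hx)

/-! ### Uniqueness and simplicity of the roots for `κ < 0` -/

lemma eval_Hk (κ : ℝ) (p : ℝ[X]) (x : ℝ) :
    (Hk κ p).eval x = κ * (derivative p).eval x ^ 2
      - p.eval x * (derivative (derivative p)).eval x := by
  simp [Hk]

lemma Hk_neg (κ : ℝ) (p : ℝ[X]) : Hk κ (-p) = Hk κ p := by
  simp [Hk]

/-- Uniqueness of the root with `L < 0 < u`, normalized to `p' > 0`. -/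
lemma no_two_roots_right {p : ℝ[X]} {κ a b : ℝ} (hκ : κ < 0) (hab : a < b)
    (hq : ∀ x ∈ Set.Icc a b, 0 < (derivative p).eval x)
    (hL : ∀ x ∈ Set.Icc a b, (derivative p).eval x *
      (derivative (derivative (derivative p))).eval x < (derivative (derivative p)).eval x ^ 2)
    (ha : (Hk κ p).eval a = 0) (hb : (Hk κ p).eval b = 0)
    (hra : (derivative (derivative p)).eval a ≤ 0) : False := by
  have hA : a ∈ Set.Icc a b := ⟨le_rfl, hab.le⟩
  have hB : b ∈ Set.Icc a b := ⟨hab.le, le_rfl⟩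
  have anti := logDeriv_strictAnti (fun x hx => (hq x hx).ne') hL
  rw [eval_Hk] at ha hb
  have hqa := hq a hA
  have hqb := hq b hB
  have hpr : p.eval a * (derivative (derivative p)).eval a < 0 := by
    have : κ * (derivative p).eval a ^ 2 < 0 := mul_neg_of_neg_of_pos hκ (by positivity)
    linarith
  have hra' : (derivative (derivative p)).eval a < 0 :=
    lt_of_le_of_ne hra (fun h => by rw [h] at hpr; simp at hpr)
  have hpa : 0 < p.eval a := by nlinarith
  have hr : ∀ x ∈ Set.Icc a b, (derivative (derivative p)).eval x < 0 := by
    intro x hx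
    have h1 := anti.antitoneOn hA hx hx.1
    have h2 : (derivative (derivative p)).eval a / (derivative p).eval a < 0 :=
      div_neg_of_neg_of_pos hra' hqa
    have h3 := lt_of_le_of_lt h1 h2
    have := hq x hx
    simpa [div_lt_iff₀ this] using h3
  have h1 : p.eval a < p.eval b := eval_strictMono hq hA hB hab
  have h2 : (derivative p).eval b < (derivative p).eval a := eval_strictAnti hr hA hB hab
  have h3 := anti hA hB hab
  simp only [div_lt_div_iff₀ hqb hqa] at h3
  generalize (derivative (derivative p)).eval a = ra at *
  generalize (derivative (derivative p)).eval b = rb at *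
  generalize (derivative p).eval a = qa at *
  generalize (derivative p).eval b = qb at *
  generalize p.eval a = pa at *
  generalize p.eval b = pb at *
  have e1 : pb * (rb * qa) < pb * (ra * qb) := mul_lt_mul_of_pos_left h3 (by linarith)
  have e2 : pb * (ra * qb) < pa * (ra * qb) :=
    mul_lt_mul_of_neg_right h1 (mul_neg_of_neg_of_pos hra' hqb)
  have e3 : κ * (qa * qb) * qb < κ * (qa * qb) * qa := by
    linear_combination e1 + e2 + qa * hb - qb * ha
  have : κ * (qa * qb) < 0 := mul_neg_of_neg_of_pos hκ (by positivity)
  nlinarith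

/-- Uniqueness of the root with `u < 0 < L`, normalized to `p' > 0`. -/
lemma no_two_roots_left {p : ℝ[X]} {κ a b : ℝ} (hκ : κ < 0) (hab : a < b)
    (hq : ∀ x ∈ Set.Icc a b, 0 < (derivative p).eval x)
    (hL : ∀ x ∈ Set.Icc a b, (derivative p).eval x *
      (derivative (derivative (derivative p))).eval x < (derivative (derivative p)).eval x ^ 2)
    (ha : (Hk κ p).eval a = 0) (hb : (Hk κ p).eval b = 0)
    (hrb : 0 ≤ (derivative (derivative p)).eval b) : False := by
  have hA : a ∈ Set.Icc a b := ⟨le_rfl, hab.le⟩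
  have hB : b ∈ Set.Icc a b := ⟨hab.le, le_rfl⟩
  have anti := logDeriv_strictAnti (fun x hx => (hq x hx).ne') hL
  rw [eval_Hk] at ha hb
  have hqa := hq a hA
  have hqb := hq b hB
  have hpr : p.eval b * (derivative (derivative p)).eval b < 0 := by
    have : κ * (derivative p).eval b ^ 2 < 0 := mul_neg_of_neg_of_pos hκ (by positivity)
    linarith
  have hrb' : 0 < (derivative (derivative p)).eval b :=
    lt_of_le_of_ne hrb (fun h => by rw [← h] at hpr; simp at hpr)
  have hpb : p.eval b < 0 := by nlinarith
  have hr : ∀ x ∈ Set.Icc a b, 0 < (derivative (derivative p)).eval x := by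
    intro x hx
    have h1 := anti.antitoneOn hx hB hx.2
    have h2 : 0 < (derivative (derivative p)).eval b / (derivative p).eval b :=
      div_pos hrb' hqb
    have h3 := lt_of_lt_of_le h2 h1
    have := hq x hx
    simpa [lt_div_iff₀ this] using h3
  have h1 : p.eval a < p.eval b := eval_strictMono hq hA hB hab
  have h2 : (derivative p).eval a < (derivative p).eval b := eval_strictMono hr hA hB hab
  have h3 := anti hA hB hab
  simp only [div_lt_div_iff₀ hqb hqa] at h3
  have hra := hr a hA
  generalize (derivative (derivative p)).eval a = ra at *
  generalize (derivative (derivative p)).eval b = rb at *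
  generalize (derivative p).eval a = qa at *
  generalize (derivative p).eval b = qb at *
  generalize p.eval a = pa at *
  generalize p.eval b = pb at *
  have e1 : pa * (ra * qb) < pa * (rb * qa) := mul_lt_mul_of_neg_left h3 (by linarith)
  have e2 : pa * (rb * qa) < pb * (rb * qa) :=
    mul_lt_mul_of_pos_right h1 (by positivity)
  have e3 : κ * (qa * qb) * qa < κ * (qa * qb) * qb := by
    linear_combination e1 + e2 - qa * hb + qb * ha
  have : κ * (qa * qb) < 0 := mul_neg_of_neg_of_pos hκ (by positivity)
  nlinarith

/-- For `κ < 0` the roots of `H_κ[p]` off the zeros of `p'` are simple. -/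
lemma derivative_Hk_ne_zero {p : ℝ[X]} {κ x : ℝ} (hκ : κ < 0)
    (hq : (derivative p).eval x ≠ 0)
    (hL : (derivative p).eval x *
      (derivative (derivative (derivative p))).eval x < (derivative (derivative p)).eval x ^ 2)
    (hx : (Hk κ p).eval x = 0) : (derivative (Hk κ p)).eval x ≠ 0 := by
  have e : (derivative (Hk κ p)).eval x =
      2 * κ * (derivative p).eval x * (derivative (derivative p)).eval x
      - (derivative p).eval x * (derivative (derivative p)).eval x
      - p.eval x * (derivative (derivative (derivative p))).eval x := by
    simp [Hk, pow_two]
    ring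
  rw [eval_Hk] at hx
  rw [e]
  generalize (derivative (derivative (derivative p))).eval x = t at *
  generalize (derivative (derivative p)).eval x = r at *
  generalize (derivative p).eval x = q at *
  generalize p.eval x = u at *
  intro h
  have hq2 : 0 < q ^ 2 := by positivity
  have hr : r ≠ 0 := by
    rintro rfl
    have : κ * q ^ 2 < 0 := mul_neg_of_neg_of_pos hκ hq2
    linarith
  have hr2 : 0 < r ^ 2 := by positivity
  -- Multiply `H' = 0` by `q r` and use `u r = κ q²`; it becomes `(κ - 1) r² = κ (q t - r²)` up to `q²`.
  have h1 : q ^ 2 * ((κ - 1) * r ^ 2 + κ * (r ^ 2 - q * t)) = 0 := by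
    linear_combination q * r * h - q * t * hx
  have h2 := (mul_eq_zero.mp h1).resolve_left hq2.ne'
  have h3 : κ * (r ^ 2 - q * t) < 0 := mul_neg_of_neg_of_pos hκ (by linarith)
  nlinarith

/-! ### Counting roots in a set -/

lemma ZIcount_le_one {I : Set ℝ} {f : ℝ[X]}
    (hs : ∀ x ∈ I, f.eval x = 0 → (derivative f).eval x ≠ 0)
    (hu : ∀ a ∈ I, ∀ b ∈ I, f.eval a = 0 → f.eval b = 0 → ¬ a < b) : ZIcount I f ≤ 1 := by
  classical
  unfold ZIcount
  by_cases hf : f = 0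
  · simp [hf]
  have hnd : (f.roots.filter (fun x => x ∈ I)).Nodup := by
    rw [Multiset.nodup_iff_count_le_one]
    intro x
    by_contra! h
    have hmem : x ∈ f.roots.filter (fun x => x ∈ I) :=
      Multiset.count_pos.mp (by omega)
    rw [Multiset.mem_filter] at hmem
    have h2 := h.trans_le (Multiset.count_le_of_le x (Multiset.filter_le _ _))
    rw [count_roots, one_lt_rootMultiplicity_iff_isRoot hf] at h2
    exact hs x hmem.2 h2.1 h2.2
  rw [← Multiset.toFinset_card_of_nodup hnd, Finset.card_le_one]
  intro a ha b hb
  simp only [Multiset.mem_toFinset, Multiset.mem_filter, mem_roots hf] at ha hb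
  rcases lt_trichotomy a b with h | h | h
  · exact absurd h (hu a ha.2 b hb.2 ha.1 hb.1)
  · exact h
  · exact absurd h (hu b hb.2 a ha.2 hb.1 ha.1)

lemma ZIcount_eq_zero {I : Set ℝ} {f : ℝ[X]} (h : ∀ x ∈ I, f.eval x ≠ 0) : ZIcount I f = 0 := by
  classical
  unfold ZIcount
  rw [Multiset.card_eq_zero, Multiset.filter_eq_nil]
  intro x hx hI
  exact h x hI (isRoot_of_mem_roots hx)

lemma ZIcount_split (I S : Set ℝ) (f : ℝ[X]) :
    ZIcount I f = ZIcount (I ∩ S) f + ZIcount (I ∩ Sᶜ) f := by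
  classical
  unfold ZIcount
  conv_lhs => rw [← Multiset.filter_add_not (fun x => x ∈ S) (f.roots.filter (fun x => x ∈ I))]
  rw [Multiset.card_add, Multiset.filter_filter, Multiset.filter_filter]
  congr 2 <;>
  · ext x
    simp only [Multiset.count_filter, Set.mem_inter_iff, Set.mem_compl_iff, and_comm]

lemma ZIcount_mul (I : Set ℝ) {f g : ℝ[X]} (h : f * g ≠ 0) :
    ZIcount I (f * g) = ZIcount I f + ZIcount I g := by
  classical
  unfold ZIcount
  rw [roots_mul h, Multiset.filter_add, Multiset.card_add]

/-- A polynomial without zeros on `[a, b]` has constant sign there. -/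
lemma sign_const {q : ℝ[X]} {a b : ℝ} (hq : ∀ x ∈ Set.Icc a b, q.eval x ≠ 0) :
    (∀ x ∈ Set.Icc a b, 0 < q.eval x) ∨ (∀ x ∈ Set.Icc a b, q.eval x < 0) := by
  by_contra! h
  obtain ⟨⟨x, hx, hx'⟩, y, hy, hy'⟩ := h
  obtain ⟨z, hz, hz'⟩ := (isPreconnected_Icc (a := a) (b := b)).intermediate_value hx hy
    q.continuous.continuousOn ⟨hx', hy'⟩
  exact hq z hz hz'

/-! ### Root counts on an interval without critical points -/

/-- The set where `L = p'' / p'` is positive. -/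
def posRegion (p : ℝ[X]) : Set ℝ :=
  {x | 0 < (derivative p).eval x * (derivative (derivative p)).eval x}

section

variable {p : ℝ[X]} {I : Set ℝ} {κ : ℝ}

/-- For `κ < 0`, at most one root in `I` with `L > 0`. -/
lemma count_pos (hs : (derivative p).Splits) (hd : 1 ≤ (derivative p).natDegree)
    (hI : I.OrdConnected) (hq : ∀ x ∈ I, (derivative p).eval x ≠ 0) (hκ : κ < 0) :
    ZIcount (I ∩ posRegion p) (Hk κ p) ≤ 1 := by
  have hL := fun x hx => laguerre_of_splits hs hd (hq x hx)
  apply ZIcount_le_one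
  · intro x hx h
    exact derivative_Hk_ne_zero hκ (hq x hx.1) (hL x hx.1) h
  · intro a ha b hb h0a h0b hab
    have hsub : Set.Icc a b ⊆ I := hI.out ha.1 hb.1
    have hbp : 0 < (derivative p).eval b * (derivative (derivative p)).eval b := hb.2
    have hB : b ∈ Set.Icc a b := ⟨hab.le, le_rfl⟩
    rcases sign_const (fun x hx => hq x (hsub hx)) with h | h
    · exact no_two_roots_left hκ hab h (fun x hx => hL x (hsub hx)) h0a h0b
        (pos_of_mul_pos_right hbp (h b hB).le).le
    · refine no_two_roots_left (p := -p) hκ hab (by simpa using h)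
        (by simpa using fun x hx => hL x (hsub hx)) (by rwa [Hk_neg]) (by rwa [Hk_neg]) ?_
      have := h b hB
      simp only [derivative_neg, eval_neg]
      nlinarith

/-- For `κ < 0`, at most one root in `I` with `L ≤ 0`. -/
lemma count_neg (hs : (derivative p).Splits) (hd : 1 ≤ (derivative p).natDegree)
    (hI : I.OrdConnected) (hq : ∀ x ∈ I, (derivative p).eval x ≠ 0) (hκ : κ < 0) :
    ZIcount (I ∩ (posRegion p)ᶜ) (Hk κ p) ≤ 1 := by
  have hL := fun x hx => laguerre_of_splits hs hd (hq x hx)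
  apply ZIcount_le_one
  · intro x hx h
    exact derivative_Hk_ne_zero hκ (hq x hx.1) (hL x hx.1) h
  · intro a ha b hb h0a h0b hab
    have hsub : Set.Icc a b ⊆ I := hI.out ha.1 hb.1
    have hap : (derivative p).eval a * (derivative (derivative p)).eval a ≤ 0 := not_lt.mp ha.2
    have hA : a ∈ Set.Icc a b := ⟨le_rfl, hab.le⟩
    rcases sign_const (fun x hx => hq x (hsub hx)) with h | h
    · refine no_two_roots_right hκ hab h (fun x hx => hL x (hsub hx)) h0a h0b ?_
      have := h a hA
      nlinarith
    · refine no_two_roots_right (p := -p) hκ hab (by simpa using h)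
        (by simpa using fun x hx => hL x (hsub hx)) (by rwa [Hk_neg]) (by rwa [Hk_neg]) ?_
      have := h a hA
      simp only [derivative_neg, eval_neg]
      nlinarith

lemma count_p (hI : I.OrdConnected) (hq : ∀ x ∈ I, (derivative p).eval x ≠ 0) :
    ZIcount I p ≤ 1 := by
  apply ZIcount_le_one (fun x hx _ => hq x hx)
  intro a ha b hb h0a h0b hab
  have hsub : Set.Icc a b ⊆ I := hI.out ha hb
  have hA : a ∈ Set.Icc a b := ⟨le_rfl, hab.le⟩
  have hB : b ∈ Set.Icc a b := ⟨hab.le, le_rfl⟩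
  rcases sign_const (fun x hx => hq x (hsub hx)) with h | h
  · have : p.eval a < p.eval b := eval_strictMono h hA hB hab
    linarith
  · have : p.eval b < p.eval a := eval_strictAnti h hA hB hab
    linarith

lemma count_second_derivative (hs : (derivative p).Splits) (hd : 1 ≤ (derivative p).natDegree)
    (hI : I.OrdConnected) (hq : ∀ x ∈ I, (derivative p).eval x ≠ 0) :
    ZIcount I (derivative (derivative p)) ≤ 1 := by
  have hL := fun x hx => laguerre_of_splits hs hd (hq x hx)
  apply ZIcount_le_one
  · intro x hx h h'
    have := hL x hx
    simp [h, h'] at this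
  · intro a ha b hb h0a h0b hab
    have hsub : Set.Icc a b ⊆ I := hI.out ha hb
    have := logDeriv_strictAnti (fun x hx => hq x (hsub hx)) (fun x hx => hL x (hsub hx))
      ⟨le_rfl, hab.le⟩ ⟨hab.le, le_rfl⟩ hab
    simp [h0a, h0b] at this

lemma count_Hk_zero (hd : 1 ≤ (derivative p).natDegree) :
    ZIcount I (Hk 0 p) = ZIcount I p + ZIcount I (derivative (derivative p)) := by
  have hq : derivative p ≠ 0 := by
    intro h
    simp [h] at hd
  have hp : p ≠ 0 := by
    rintro rfl
    simp at hq
  have hr : derivative (derivative p) ≠ 0 := by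
    intro h
    have := derivative_eq_zero.mp h
    omega
  rw [← ZIcount_mul I (mul_ne_zero hp hr)]
  simp [ZIcount, Hk, roots_neg]

lemma count_le_two (hs : (derivative p).Splits) (hd : 1 ≤ (derivative p).natDegree)
    (hI : I.OrdConnected) (hq : ∀ x ∈ I, (derivative p).eval x ≠ 0) (hκ : κ ≤ 0) :
    ZIcount I (Hk κ p) ≤ 2 := by
  rcases hκ.lt_or_eq with hκ | rfl
  · rw [ZIcount_split I (posRegion p)]
    have := count_pos hs hd hI hq hκ
    have := count_neg hs hd hI hq hκ
    omega
  · rw [count_Hk_zero hd]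
    have := count_p hI hq
    have := count_second_derivative hs hd hI hq
    omega

/-- If `L` has constant sign on `I`, there is at most one root. -/
lemma count_le_one (hs : (derivative p).Splits) (hd : 1 ≤ (derivative p).natDegree)
    (hI : I.OrdConnected)
    (h : (∀ x ∈ I, 0 < (derivative (derivative p)).eval x / (derivative p).eval x) ∨
      (∀ x ∈ I, (derivative (derivative p)).eval x / (derivative p).eval x < 0)) (hκ : κ ≤ 0) :
    ZIcount I (Hk κ p) ≤ 1 := by
  -- A zero denominator would give the quotient `0`, so constant sign already excludes zeros of `p'`.
  have hne : ∀ x ∈ I, (derivative p).eval x ≠ 0 ∧ (derivative (derivative p)).eval x ≠ 0 := by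
    intro x hx
    have : (derivative (derivative p)).eval x / (derivative p).eval x ≠ 0 := by
      rcases h with h | h
      · exact (h x hx).ne'
      · exact (h x hx).ne
    rw [div_ne_zero_iff] at this
    exact this.symm
  have hq := fun x hx => (hne x hx).1
  rcases hκ.lt_or_eq with hκ | rfl
  · rcases h with h | h
    · have e : I ∩ posRegion p = I := by
        refine Set.inter_eq_left.mpr fun x hx => ?_
        rcases div_pos_iff.mp (h x hx) with h | h
        · exact mul_pos h.2 h.1
        · exact mul_pos_of_neg_of_neg h.2 h.1
      have := count_pos hs hd hI hq hκ
      rwa [e] at this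
    · have e : I ∩ (posRegion p)ᶜ = I := by
        refine Set.inter_eq_left.mpr fun x hx => ?_
        refine not_lt.mpr (?_ : (derivative p).eval x * (derivative (derivative p)).eval x ≤ 0)
        rcases div_neg_iff.mp (h x hx) with h | h
        · exact (mul_neg_of_neg_of_pos h.2 h.1).le
        · exact (mul_neg_of_pos_of_neg h.2 h.1).le
      have := count_neg hs hd hI hq hκ
      rwa [e] at this
  · rw [count_Hk_zero hd, ZIcount_eq_zero (fun x hx => (hne x hx).2)]
    simpa using count_p hI hq

end

/-! ### The unbounded intervals and the final count -/

/-- To the right of all zeros of a nonconstant real-rooted polynomial the logarithmic derivative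
`∑ 1 / (x - r)` is positive. -/
lemma logDeriv_pos {q : ℝ[X]} (hs : q.Splits) (hd : 1 ≤ q.natDegree) {x : ℝ}
    (hx : ∀ r ∈ q.roots, r < x) : 0 < (derivative q).eval x / q.eval x := by
  have h0 : q ≠ 0 := by rintro rfl; simp at hd
  have hqx : q.eval x ≠ 0 := fun h => lt_irrefl x (hx x ((mem_roots h0).mpr h))
  have hne : q.roots ≠ 0 := by
    intro h
    have := hs.natDegree_eq_card_roots
    simp [h] at this
    omega
  rw [hs.eval_derivative_div_eval_of_ne_zero hqx]
  have := Multiset.sum_lt_sum_of_nonempty (f := fun _ => (0 : ℝ)) (g := fun r => 1 / (x - r)) hne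
    (fun r hr => one_div_pos.mpr (sub_pos.mpr (hx r hr)))
  simpa using this

/-- To the left of all zeros of a nonconstant real-rooted polynomial the logarithmic derivative
`∑ 1 / (x - r)` is negative. -/
lemma logDeriv_neg {q : ℝ[X]} (hs : q.Splits) (hd : 1 ≤ q.natDegree) {x : ℝ}
    (hx : ∀ r ∈ q.roots, x < r) : (derivative q).eval x / q.eval x < 0 := by
  have h0 : q ≠ 0 := by rintro rfl; simp at hd
  have hqx : q.eval x ≠ 0 := fun h => lt_irrefl x (hx x ((mem_roots h0).mpr h))
  have hne : q.roots ≠ 0 := by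
    intro h
    have := hs.natDegree_eq_card_roots
    simp [h] at this
    omega
  rw [hs.eval_derivative_div_eval_of_ne_zero hqx]
  have := Multiset.sum_lt_sum_of_nonempty (g := fun _ => (0 : ℝ)) (f := fun r => 1 / (x - r)) hne
    (fun r hr => one_div_neg.mpr (sub_neg.mpr (hx r hr)))
  simpa using this

theorem stmt18 (n : ℕ) (hn : 2 ≤ n) (p : ℝ[X]) (hdeg : p.natDegree = n)
    (hsimple : ∀ x : ℝ, p.IsRoot x → rootMultiplicity x p = 1)
    (ξ : ℕ → ℝ)
    (hmono : ∀ i j, 1 ≤ i → i < j → j ≤ n - 1 → ξ i < ξ j)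
    (hroot : ∀ k, 1 ≤ k → k ≤ n - 1 → (derivative p).IsRoot (ξ k))
    (hall : ∀ x : ℝ, (derivative p).IsRoot x → ∃ k, 1 ≤ k ∧ k ≤ n - 1 ∧ x = ξ k)
    (κ : ℝ) (hκ : κ ≤ 0) :
    (∀ k, 2 ≤ k → k ≤ n - 1 →
      ZIcount (Set.Ioo (ξ (k - 1)) (ξ k)) (Hk κ p) ≤ 2) ∧
    ZIcount (Set.Iio (ξ 1)) (Hk κ p) ≤ 1 ∧
    ZIcount (Set.Ioi (ξ (n - 1))) (Hk κ p) ≤ 1 := by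
  have hnd : (derivative p).natDegree = n - 1 := by rw [natDegree_derivative, hdeg]
  have hd : 1 ≤ (derivative p).natDegree := by omega
  have h0 : derivative p ≠ 0 := by intro h; simp [h] at hd
  have hle : ∀ i j, 1 ≤ i → i ≤ j → j ≤ n - 1 → ξ i ≤ ξ j := by
    intro i j hi hij hj
    rcases hij.lt_or_eq with h | rfl
    · exact (hmono i j hi h hj).le
    · exact le_rfl
  -- `p'` has degree `n - 1` and the `n - 1` distinct real roots `ξ k`, so it splits.
  have hs : (derivative p).Splits := by
    rw [splits_iff_card_roots]
    apply le_antisymm (card_roots' _)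
    have hinj : Set.InjOn ξ (Finset.Icc 1 (n - 1) : Finset ℕ) := by
      intro i hi j hj hij
      simp only [Finset.coe_Icc, Set.mem_Icc] at hi hj
      rcases lt_trichotomy i j with h | h | h
      · exact absurd hij (hmono i j hi.1 h hj.2).ne
      · exact h
      · exact absurd hij (hmono j i hj.1 h hi.2).ne'
    have hc := Finset.card_image_of_injOn hinj
    have hsub : (Finset.Icc 1 (n - 1)).image ξ ⊆ (derivative p).roots.toFinset := by
      intro x hx
      simp only [Finset.mem_image, Finset.mem_Icc] at hx
      obtain ⟨k, hk, rfl⟩ := hx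
      rw [Multiset.mem_toFinset, mem_roots h0]
      exact hroot k hk.1 hk.2
    have h1 := Finset.card_le_card hsub
    have h2 := Multiset.toFinset_card_le (derivative p).roots
    rw [hc, Nat.card_Icc] at h1
    omega
  refine ⟨fun k hk hkn => ?_, ?_, ?_⟩
  · refine count_le_two hs hd Set.ordConnected_Ioo (fun x hx h => ?_) hκ
    obtain ⟨j, hj1, hj2, rfl⟩ := hall x h
    rcases Nat.lt_or_ge j k with h | h
    · exact absurd hx.1 (not_lt.mpr (hle j (k - 1) hj1 (by omega) (by omega)))
    · exact absurd hx.2 (not_lt.mpr (hle k j (by omega) h hj2))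
  · refine count_le_one hs hd Set.ordConnected_Iio (Or.inr fun x hx => ?_) hκ
    refine logDeriv_neg hs hd fun r hr => ?_
    obtain ⟨j, hj1, hj2, rfl⟩ := hall r (isRoot_of_mem_roots hr)
    exact lt_of_lt_of_le hx (hle 1 j le_rfl hj1 hj2)
  · refine count_le_one hs hd Set.ordConnected_Ioi (Or.inl fun x hx => ?_) hκ
    refine logDeriv_pos hs hd fun r hr => ?_
    obtain ⟨j, hj1, hj2, rfl⟩ := hall r (isRoot_of_mem_roots hr)
    exact lt_of_le_of_lt (hle j (n - 1) hj1 hj2 le_rfl) hx
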